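/- arXiv:2505.03954 — 2 statements merged into one kernel-verified Lean document; each statement's English description precedes it below -/
import Mathlib

section
/- Let $n \ge 2k \ge 2$ be integers, let $S$ be a set, and let $F : \{0,1\}^n \to S$ be a function such that $F(x_1,\dots,x_n)$ depends only on the coordinates $x_1,\dots,x_s$. Let $\vec\sigma$ be a uniformly random vector in $\{0,1\}^n$ with exactly $k$ ones, and let $\vec\beta$ be a vector of $n$ independent Bernoulli($k/n$) random variables. Then the total variation distance between the distributions of $F(\vec\sigma)$ and $F(\vec\beta)$ is at most $(\max(s, 2n/k) - 1)/(n-1)$. -/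
open Finset
open scoped Classical

lemma alg_core (p q t x L P U r1 r2 r : ℝ) (hp : 0 < p) (hq : 0 < q) (hpq : p + q = 1)
    (hx : 0 < x) (hxt : x < t) (hP : 0 < P) (hL : 0 ≤ L) (hU : 0 ≤ U) (hs : L + P + U = 1)
    (h3 : p * t * L ≤ x * (q * P + L)) (h4 : q * t * U ≤ (t - x) * (p * P + U))
    (hr1 : 0 ≤ r1) (hr1' : r1 ≤ L) (hr2 : 0 ≤ r2) (hr2' : r2 ≤ U) (hr : 0 ≤ r) (hr' : r ≤ 1) :
    |(r1 + P * r - (r1 + P * r + r2) * (L + P)) / (p * (t - x))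
      - (r1 - (r1 + P * r + r2) * L) / (q * x)| ≤ P / (t * p * q) := by
  have ht : 0 < t := hx.trans hxt
  have htx : 0 < t - x := sub_pos.2 hxt
  obtain ⟨α, hα⟩ : ∃ α, α = 1 / (p * (t - x)) := ⟨_, rfl⟩
  obtain ⟨β, hβ⟩ : ∃ β, β = 1 / (q * x) := ⟨_, rfl⟩
  have hq' : q = 1 - p := by linarith
  have c1 : α * U - β * (P + U) ≤ 0 := by
    rw [hα, hβ, one_div_mul_eq_div, one_div_mul_eq_div, sub_nonpos, div_le_div_iff₀ (by positivity) (by positivity)]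
    subst hq'; nlinarith
  have c2 : - α * (L + P) + β * L ≤ 0 := by
    rw [neg_mul, hα, hβ, one_div_mul_eq_div, one_div_mul_eq_div, neg_add_nonpos_iff, div_le_div_iff₀ (by positivity) (by positivity)]
    subst hq'; nlinarith
  have c3 : α * U + β * L ≤ 1 / (t * p * q) := by
    have e1 : α * U ≤ (p * P + U) / (t * p * q) := by
      rw [hα, one_div_mul_eq_div, div_le_div_iff₀ (by positivity) (by positivity)]
      nlinarith
    have e2 : β * L ≤ (q * P + L) / (t * p * q) := by
      rw [hβ, one_div_mul_eq_div, div_le_div_iff₀ (by positivity) (by positivity)]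
      nlinarith
    calc _ ≤ _ := add_le_add e1 e2
      _ = _ := by
        rw [← add_div]; congr 1
        linear_combination P * hpq + hs
  have key : (r1 + P * r - (r1 + P * r + r2) * (L + P)) / (p * (t - x))
      - (r1 - (r1 + P * r + r2) * L) / (q * x) =
      r1 * (α * U - β * (P + U)) + P * r * (α * U + β * L) + r2 * (- α * (L + P) + β * L) := by
    have hU' : U = 1 - L - P := by linarith
    rw [div_eq_mul_one_div, ← hα, div_eq_mul_one_div _ (q * x), ← hβ, hU']; ring
  have tot : L * (α * U - β * (P + U)) + P * (α * U + β * L) + U * (- α * (L + P) + β * L) = 0 := by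
    ring
  have hα0 : 0 < α := by rw [hα]; positivity
  have hβ0 : 0 < β := by rw [hβ]; positivity
  have c0 : 0 ≤ α * U + β * L := by positivity
  have hfin : P * (α * U + β * L) ≤ P / (t * p * q) := by
    rw [div_eq_mul_one_div]; exact mul_le_mul_of_nonneg_left c3 hP.le
  rw [key, abs_le]
  have a1 := mul_nonneg (sub_nonneg.2 hr1') (neg_nonneg.2 c1)
  have a2 := mul_nonneg (sub_nonneg.2 hr2') (neg_nonneg.2 c2)
  have a3 := mul_nonneg hr1 (neg_nonneg.2 c1)
  have a4 := mul_nonneg hr2 (neg_nonneg.2 c2)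
  have a5 := mul_nonneg (mul_nonneg hP.le hr) c0
  have a6 := mul_nonneg (mul_nonneg hP.le (sub_nonneg.2 hr')) c0
  constructor <;> nlinarith

lemma stein_core (t : ℕ) (ht : 1 ≤ t) (n k : ℝ) (hk : 0 < k) (hkn : k < n) (hn : 1 < n)
    (w π r : ℕ → ℝ)
    (hw : ∀ j, 0 ≤ w j) (hw1 : ∑ j ∈ range (t + 1), w j = 1)
    (hwr : ∀ j < t, (k - j) * (t - j) * w j = (j + 1) * (n - k - t + j + 1) * w (j + 1))
    (hπ : ∀ j ≤ t, 0 < π j) (hπ1 : ∑ j ∈ range (t + 1), π j = 1)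
    (hπr : ∀ j < t, k / n * (t - j) * π j = (1 - k / n) * (j + 1) * π (j + 1))
    (hr0 : ∀ j, 0 ≤ r j) (hr1 : ∀ j, r j ≤ 1) :
    |∑ j ∈ range (t + 1), w j * r j - ∑ j ∈ range (t + 1), π j * r j| ≤ (t - 1) / (n - 1) := by
  have hn0 : 0 < n := by linarith
  have ht0 : (0 : ℝ) < t := by exact_mod_cast ht
  obtain ⟨p, hpdef⟩ : ∃ p, p = k / n := ⟨_, rfl⟩
  obtain ⟨q, hqdef⟩ : ∃ q, q = 1 - p := ⟨_, rfl⟩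
  rw [← hpdef, ← hqdef] at hπr
  have hp : 0 < p := by rw [hpdef]; positivity
  have hq : 0 < q := by rw [hqdef, hpdef, sub_pos, div_lt_one hn0]; exact hkn
  have hpn : p * n = k := by rw [hpdef]; field_simp
  -- Stein identity for w
  have stein : ∀ g : ℕ → ℝ, ∑ j ∈ range (t + 1), w j * ((k - j) * (t - j) * g (j + 1)) =
      ∑ j ∈ range (t + 1), w j * (j * (n - k - t + j) * g j) := by
    intro g
    rw [sum_range_succ, sum_range_succ']
    simp only [sub_self, mul_zero, zero_mul, add_zero, CharP.cast_eq_zero]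
    refine sum_congr rfl fun j hj => ?_
    have := hwr j (mem_range.1 hj)
    push_cast
    linear_combination g (j + 1) * this
  obtain ⟨m1, hm1⟩ : ∃ m1, m1 = ∑ j ∈ range (t + 1), w j * j := ⟨_, rfl⟩
  obtain ⟨m2, hm2⟩ : ∃ m2, m2 = ∑ j ∈ range (t + 1), w j * (j : ℝ) ^ 2 := ⟨_, rfl⟩
  have e1 : n * m1 = k * t := by
    have h := stein (fun _ => 1)
    rw [← sub_eq_zero, ← sum_sub_distrib] at h
    have : k * t * ∑ j ∈ range (t + 1), w j - n * m1 = 0 := by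
      rw [← h, hm1, mul_sum, mul_sum, ← sum_sub_distrib]
      exact sum_congr rfl fun j _ => by ring
    rw [hw1] at this; linarith
  have e2 : (n - 1) * m2 = k * t + (k * t - k - t) * m1 := by
    have h := stein (fun j => j)
    rw [← sub_eq_zero, ← sum_sub_distrib] at h
    have : k * t * ∑ j ∈ range (t + 1), w j + (k * t - k - t) * m1 - (n - 1) * m2 = 0 := by
      rw [← h, hm1, hm2, mul_sum, mul_sum, mul_sum, ← sum_add_distrib, ← sum_sub_distrib]
      exact sum_congr rfl fun j _ => by push_cast; ring
    rw [hw1] at this; linarith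
  have e3 : ∑ j ∈ range (t + 1), w j * (j * (t - j)) = t * (t - 1) * (p * q) * n / (n - 1) := by
    have : ∑ j ∈ range (t + 1), w j * (j * ((t : ℝ) - j)) = t * m1 - m2 := by
      rw [hm1, hm2, mul_sum, ← sum_sub_distrib]
      exact sum_congr rfl fun j _ => by ring
    rw [this, eq_div_iff (by linarith)]
    have hm : m1 = p * t := by
      have : n * (m1 - p * t) = 0 := by linear_combination e1 - t * hpn
      rcases mul_eq_zero.1 this with h | h <;> linarith
    rw [hm, ← hpn] at e2
    rw [hm, hqdef]
    linear_combination -e2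
  -- binomial identities
  have b1 : ∀ x ≤ t, p * t * ∑ i ∈ range x, π i = q * x * π x + ∑ i ∈ range x, i * π i := by
    intro x
    induction x with
    | zero => simp
    | succ x ih =>
      intro hx
      have h1 := ih (by omega)
      have h2 := hπr x (by omega)
      rw [sum_range_succ, sum_range_succ]; push_cast
      rw [mul_add, h1]
      have : q = 1 - p := hqdef
      rw [this] at h2 ⊢
      linear_combination h2
  have b2 : ∑ i ∈ range (t + 1), i * π i = p * t := by
    have h1 := b1 t le_rfl
    rw [sum_range_succ] at hπ1 ⊢
    rw [hqdef] at h1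
    linear_combination p * t * hπ1 - h1
  obtain ⟨μ, hμ⟩ : ∃ μ, μ = ∑ j ∈ range (t + 1), π j * r j := ⟨_, rfl⟩
  obtain ⟨S, hS⟩ : ∃ S : ℕ → ℝ, S = fun x => ∑ i ∈ range x, π i * (r i - μ) := ⟨_, rfl⟩
  obtain ⟨g, hg⟩ : ∃ g : ℕ → ℝ, g = fun x => S x / (q * x * π x) := ⟨_, rfl⟩
  have hS0 : S 0 = 0 := by simp [hS]
  have hSt : S (t + 1) = 0 := by
    simp only [hS, mul_sub, sum_sub_distrib]
    rw [← sum_mul, hπ1, ← hμ]; ring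
  have hSs : ∀ x, S (x + 1) = S x + π x * (r x - μ) := by
    intro x; simp only [hS]; rw [sum_range_succ]
  have g1 : ∀ x < t, g (x + 1) = S (x + 1) / (p * (t - x) * π x) := by
    intro x hx
    simp only [hg]; rw [hπr x hx]; push_cast; rfl
  have sol : ∀ x ≤ t, p * (t - x) * g (x + 1) - q * x * g x = r x - μ := by
    intro x hx
    have hπx := hπ x hx
    have A1 : p * (t - x) * g (x + 1) = S (x + 1) / π x := by
      rcases hx.lt_or_eq with h | h
      · rw [g1 x h]
        have : (0 : ℝ) < t - x := by rw [sub_pos]; exact_mod_cast h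
        field_simp
      · rw [h, hSt]; simp
    have A2 : q * x * g x = S x / π x := by
      rcases Nat.eq_zero_or_pos x with h | h
      · rw [h, hS0]; simp
      · have : (0 : ℝ) < x := by exact_mod_cast h
        simp only [hg]; field_simp
    rw [A1, A2, hSs]; field_simp; ring
  have dg : ∀ x, 0 < x → x < t → |g (x + 1) - g x| ≤ 1 / (t * p * q) := by
    intro x hx hxt
    have hπx := hπ x hxt.le
    have hx' : (0 : ℝ) < x := by exact_mod_cast hx
    have hxt' : (x : ℝ) < t := by exact_mod_cast hxt
    have hsub : (0 : ℝ) < t - x := by linarith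
    have split : ∀ f : ℕ → ℝ, ∑ i ∈ range (t + 1), f i =
        ∑ i ∈ range x, f i + f x + ∑ i ∈ Ico (x + 1) (t + 1), f i := by
      intro f
      rw [← sum_range_succ, sum_range_add_sum_Ico _ (by omega)]
    have pos1 : ∀ i ∈ range x, 0 ≤ π i := fun i hi => (hπ i (by simp at hi; omega)).le
    have pos2 : ∀ i ∈ Ico (x + 1) (t + 1), 0 ≤ π i := fun i hi => (hπ i (by simp at hi; omega)).le
    have hM : ∑ i ∈ range x, i * π i ≤ x * ∑ i ∈ range x, π i := by
      rw [mul_sum]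
      refine sum_le_sum fun i hi => mul_le_mul_of_nonneg_right ?_ (pos1 i hi)
      have := mem_range.1 hi
      exact_mod_cast this.le
    have hN : x * ∑ i ∈ Ico (x + 1) (t + 1), π i ≤ ∑ i ∈ Ico (x + 1) (t + 1), i * π i := by
      rw [mul_sum]
      refine sum_le_sum fun i hi => mul_le_mul_of_nonneg_right ?_ (pos2 i hi)
      have := (mem_Ico.1 hi).1
      exact_mod_cast (by omega : x ≤ i)
    have hb1 := b1 x hxt.le
    have hs := hπ1
    have hb2 := b2
    have hμ' := hμ
    rw [split] at hs hb2 hμ'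
    have := alg_core p q t x (∑ i ∈ range x, π i) (π x) (∑ i ∈ Ico (x + 1) (t + 1), π i)
      (∑ i ∈ range x, π i * r i) (∑ i ∈ Ico (x + 1) (t + 1), π i * r i) (r x) hp hq
      (by rw [hqdef]; ring) hx' hxt' hπx (sum_nonneg pos1) (sum_nonneg pos2) hs
      (by rw [hb1]; linarith)
      (by
        have : q = 1 - p := hqdef
        rw [this] at hb1 ⊢
        have hU : ∑ i ∈ Ico (x + 1) (t + 1), π i = 1 - ∑ i ∈ range x, π i - π x := by linarith
        rw [hU] at hN ⊢
        nlinarith)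
      (sum_nonneg fun i hi => mul_nonneg (pos1 i hi) (hr0 i))
      (sum_le_sum fun i hi => mul_le_of_le_one_right (pos1 i hi) (hr1 i))
      (sum_nonneg fun i hi => mul_nonneg (pos2 i hi) (hr0 i))
      (sum_le_sum fun i hi => mul_le_of_le_one_right (pos2 i hi) (hr1 i))
      (hr0 x) (hr1 x)
    rw [← hμ'] at this
    have hSx : S x = ∑ i ∈ range x, π i * r i - μ * ∑ i ∈ range x, π i := by
      simp only [hS, mul_sub, sum_sub_distrib]; rw [← sum_mul]; ring
    have hg' : g (x + 1) - g x = (S (x + 1) / (p * (t - x)) - S x / (q * x)) / π x := by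
      rw [g1 x hxt]; simp only [hg]; field_simp
    rw [hg', abs_div, abs_of_pos hπx, div_le_iff₀ hπx, hSs, hSx, one_div_mul_eq_div]
    have e : ∑ i ∈ range x, π i * r i - μ * ∑ i ∈ range x, π i + π x * (r x - μ) =
        ∑ i ∈ range x, π i * r i + π x * r x - μ * (∑ i ∈ range x, π i + π x) := by ring
    rw [e]
    exact this
  have main : n * (∑ j ∈ range (t + 1), w j * r j - μ) =
      ∑ j ∈ range (t + 1), w j * (j * (t - j)) * (g (j + 1) - g j) := by
    have h1 : ∑ j ∈ range (t + 1), w j * r j - μ = ∑ j ∈ range (t + 1), w j * (r j - μ) := by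
      simp only [mul_sub, sum_sub_distrib]; rw [← sum_mul, hw1]; ring
    have h2 := stein g
    rw [← sub_eq_zero, ← sum_sub_distrib] at h2
    rw [h1, ← add_zero (∑ j ∈ range (t + 1), w j * (j * (t - j)) * (g (j + 1) - g j)), ← h2,
      mul_sum, ← sum_add_distrib]
    refine sum_congr rfl fun j hj => ?_
    rw [← sol j (by simp at hj; omega), ← hpn, hqdef]
    ring
  rw [← hμ]
  have bd : |n * (∑ j ∈ range (t + 1), w j * r j - μ)| ≤
      ∑ j ∈ range (t + 1), w j * (j * (t - j)) * (1 / (t * p * q)) := by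
    rw [main]
    refine (abs_sum_le_sum_abs _ _).trans (sum_le_sum fun j hj => ?_)
    have hjt : j ≤ t := by simp at hj; omega
    have hjt' : (j : ℝ) ≤ t := by exact_mod_cast hjt
    have hnn : 0 ≤ w j * (j * (t - j)) := mul_nonneg (hw j) (mul_nonneg (by positivity) (by linarith))
    rw [abs_mul, abs_of_nonneg hnn]
    rcases Nat.eq_zero_or_pos j with h | h
    · simp [h]
    rcases hjt.lt_or_eq with h' | h'
    · exact mul_le_mul_of_nonneg_left (dg j h h') hnn
    · simp [h']
  rw [← sum_mul, e3, abs_mul, abs_of_pos hn0] at bd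
  have hn1 : 0 < n - 1 := by linarith
  have : (t : ℝ) * (t - 1) * (p * q) * n / (n - 1) * (1 / (t * p * q)) = n * ((t - 1) / (n - 1)) := by
    field_simp
  rw [this] at bd
  exact le_of_mul_le_mul_left bd hn0

/-- Number of `true` entries. -/
def wt {n : ℕ} (x : Fin n → Bool) : ℕ := (Finset.univ.filter (fun i => x i = true)).card

lemma wt_le {n : ℕ} (x : Fin n → Bool) : wt x ≤ n := by
  unfold wt; exact (card_le_univ _).trans (by simp)

lemma wt_append {t m : ℕ} (y : Fin t → Bool) (z : Fin m → Bool) :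
    wt (Fin.append y z) = wt y + wt z := by
  unfold wt
  simp only [card_filter, Fin.sum_univ_add, Fin.append_left, Fin.append_right]

lemma card_wt (n k : ℕ) : ((univ : Finset (Fin n → Bool)).filter (fun x => wt x = k)).card
    = n.choose k := by
  have := card_powersetCard k (univ : Finset (Fin n))
  rw [card_univ, Fintype.card_fin] at this
  rw [← this]
  refine card_bij' (fun x _ => univ.filter (fun i => x i = true))
    (fun s _ => fun i => decide (i ∈ s)) ?_ ?_ ?_ ?_
  · intro x hx
    simp only [mem_filter, mem_univ, true_and] at hx
    exact mem_powersetCard.2 ⟨subset_univ _, hx⟩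
  · intro s hs
    simp only [mem_powersetCard] at hs
    refine mem_filter.2 ⟨mem_univ _, ?_⟩
    unfold wt
    simpa using hs.2
  · intro x hx; ext i; simp
  · intro s hs; ext i; simp

lemma sum_cube_add (t m : ℕ) (f : (Fin (t + m) → Bool) → ℝ) :
    ∑ x, f x = ∑ y : Fin t → Bool, ∑ z : Fin m → Bool, f (Fin.append y z) := by
  rw [← Fintype.sum_prod_type', ← (Fin.appendEquiv t m).sum_comp]
  rfl

lemma sum_by_wt (t : ℕ) (f : ℕ → ℝ) (B : (Fin t → Bool) → Prop) :
    ∑ y : Fin t → Bool, f (wt y) * (if B y then (1 : ℝ) else 0) =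
      ∑ j ∈ range (t + 1), f j *
        (((univ : Finset (Fin t → Bool)).filter (fun y => wt y = j)).filter B).card := by
  rw [← sum_fiberwise_of_maps_to (s := univ) (t := range (t + 1)) (g := fun y => wt y)
    (fun y _ => mem_range.2 (Nat.lt_succ_of_le (wt_le y)))]
  refine sum_congr rfl fun j _ => ?_
  rw [card_filter, Nat.cast_sum, mul_sum]
  refine sum_congr rfl fun y hy => ?_
  rw [(mem_filter.1 hy).2]
  simp

lemma prod_eq_wt (t : ℕ) (p q : ℝ) (y : Fin t → Bool) :
    (∏ i, if y i then p else q) = p ^ wt y * q ^ (t - wt y) := by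
  rw [prod_ite, prod_const, prod_const]
  congr 2
  have := card_filter_add_card_filter_not (s := (univ : Finset (Fin t))) (fun i => y i = true)
  simp only [card_univ, Fintype.card_fin] at this
  unfold wt
  omega

lemma sum_prod_one (m : ℕ) (p : ℝ) :
    ∑ z : Fin m → Bool, (∏ i, if z i then p else 1 - p) = 1 := by
  have := Finset.prod_univ_sum (fun _ : Fin m => (univ : Finset Bool))
    (fun _ b => if b then p else 1 - p)
  rw [Fintype.piFinset_univ] at this
  rw [← this]; simp

/-- Number of completions. -/
def Hc (m k j : ℕ) : ℕ := ((univ : Finset (Fin m → Bool)).filter (fun z => j + wt z = k)).card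

lemma Hc_le {m k j : ℕ} (h : j ≤ k) : Hc m k j = m.choose (k - j) := by
  rw [← card_wt]; unfold Hc; congr 1; ext z; simp; omega

lemma Hc_gt {m k j : ℕ} (h : k < j) : Hc m k j = 0 := by
  unfold Hc; rw [card_eq_zero, filter_eq_empty_iff]; intro z _; omega

lemma Hc_rec (m k j : ℕ) :
    ((k : ℝ) - j) * Hc m k j = ((m : ℝ) - k + j + 1) * Hc m k (j + 1) := by
  rcases lt_trichotomy j k with h | h | h
  · rw [Hc_le h.le, Hc_le (by omega : j + 1 ≤ k)]
    obtain ⟨d, rfl⟩ : ∃ d, k = j + 1 + d := ⟨k - (j + 1), by omega⟩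
    have e1 : j + 1 + d - j = d + 1 := by omega
    have e2 : j + 1 + d - (j + 1) = d := by omega
    rw [e1, e2]
    have := Nat.choose_succ_right_eq m d
    rcases le_or_gt d m with hd | hd
    · have h2 : ((m.choose (d + 1) : ℕ) : ℝ) * (d + 1) = m.choose d * ((m : ℝ) - d) := by
        rw [← Nat.cast_sub hd]; exact_mod_cast this
      push_cast
      linear_combination h2
    · rw [Nat.choose_eq_zero_of_lt hd, Nat.choose_eq_zero_of_lt (by omega : m < d + 1)]; simp
  · subst h; rw [Hc_gt (Nat.lt_succ_self _)]; simp
  · rw [Hc_gt h, Hc_gt (by omega : k < j + 1)]; simp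

lemma choose_rec (t j : ℕ) (h : j < t) :
    ((t : ℝ) - j) * t.choose j = ((j : ℝ) + 1) * t.choose (j + 1) := by
  have := Nat.choose_succ_right_eq t j
  rw [← Nat.cast_sub h.le]
  have h2 : ((t.choose (j + 1) : ℕ) : ℝ) * (j + 1) = t.choose j * ((t - j : ℕ) : ℝ) := by
    exact_mod_cast this
  linear_combination -h2

lemma hyp_count (t m k : ℕ) (B : (Fin t → Bool) → Prop) (C : (Fin (t + m) → Bool) → Prop)
    (hC : ∀ y z, C (Fin.append y z) ↔ B y) :
    ((((univ : Finset (Fin (t + m) → Bool)).filter (fun x => wt x = k)).filter C).card : ℝ) =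
      ∑ j ∈ range (t + 1), (Hc m k j : ℝ) *
        (((univ : Finset (Fin t → Bool)).filter (fun y => wt y = j)).filter B).card := by
  rw [← sum_by_wt t (fun j => (Hc m k j : ℝ)) B, filter_filter, card_filter, Nat.cast_sum,
    sum_cube_add]
  refine sum_congr rfl fun y _ => ?_
  unfold Hc
  rw [card_filter, Nat.cast_sum, sum_mul]
  refine sum_congr rfl fun z _ => ?_
  rw [wt_append]
  simp only [hC]
  by_cases h1 : wt y + wt z = k <;> by_cases h2 : B y <;> simp [h1, h2]

lemma bin_count (t m : ℕ) (p : ℝ) (B : (Fin t → Bool) → Prop) (C : (Fin (t + m) → Bool) → Prop)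
    (hC : ∀ y z, C (Fin.append y z) ↔ B y) :
    ∑ x : Fin (t + m) → Bool, (∏ i, if x i then p else 1 - p) * (if C x then (1 : ℝ) else 0) =
      ∑ j ∈ range (t + 1), (p ^ j * (1 - p) ^ (t - j)) *
        (((univ : Finset (Fin t → Bool)).filter (fun y => wt y = j)).filter B).card := by
  rw [← sum_by_wt t (fun j => p ^ j * (1 - p) ^ (t - j)) B, sum_cube_add]
  refine sum_congr rfl fun y _ => ?_
  simp only [hC, Fin.prod_univ_add, Fin.append_left, Fin.append_right]
  rw [← sum_mul, ← mul_sum, sum_prod_one, mul_one, prod_eq_wt]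

lemma tv_aux (t m k : ℕ) (ht : 1 ≤ t) (hk : 1 ≤ k) (hkn : 2 * k ≤ t + m)
    (C : (Fin (t + m) → Bool) → Prop)
    (hC : ∀ x y, (∀ i : Fin (t + m), (i : ℕ) < t → x i = y i) → (C x ↔ C y)) :
    |((((univ : Finset (Fin (t + m) → Bool)).filter (fun x => wt x = k)).filter C).card : ℝ) /
        ((univ : Finset (Fin (t + m) → Bool)).filter (fun x => wt x = k)).card -
      ∑ x : Fin (t + m) → Bool,
        (∏ i, if x i then (k : ℝ) / (t + m : ℕ) else 1 - (k : ℝ) / (t + m : ℕ)) *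
          (if C x then (1 : ℝ) else 0)|
      ≤ ((t : ℝ) - 1) / (((t + m : ℕ) : ℝ) - 1) := by
  obtain ⟨n, hn⟩ : ∃ n : ℕ, n = t + m := ⟨_, rfl⟩
  have hB : ∀ y z, C (Fin.append y z) ↔ C (Fin.append y (fun _ => false)) := by
    intro y z
    refine hC _ _ fun i hi => ?_
    have : i = Fin.castAdd m ⟨i, hi⟩ := rfl
    rw [this, Fin.append_left, Fin.append_left]
  have hH := hyp_count t m k _ C hB
  have hBin := bin_count t m ((k : ℝ) / (t + m : ℕ)) _ C hB
  have hT := hyp_count t m k (fun _ => True) (fun _ => True) (fun _ _ => Iff.rfl)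
  simp only [filter_true, card_wt] at hT
  rw [hH, hBin, card_wt]
  generalize hb : (fun j => ((((univ : Finset (Fin t → Bool)).filter (fun y => wt y = j)).filter
    (fun y => C (Fin.append y (fun _ => false)))).card)) = b
  have hb' : ∀ j, b j ≤ t.choose j := by
    intro j; rw [← hb, ← card_wt]; exact card_filter_le _ _
  have hbj : ∀ j, ((((univ : Finset (Fin t → Bool)).filter (fun y => wt y = j)).filter
    (fun y => C (Fin.append y (fun _ => false)))).card) = b j := fun j => by rw [← hb]
  simp only [hbj]
  have hN : (0 : ℝ) < (t + m).choose k := by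
    exact_mod_cast Nat.choose_pos (by omega)
  have hk0 : (0 : ℝ) < k := by exact_mod_cast hk
  have hkn' : (k : ℝ) < (t + m : ℕ) := by exact_mod_cast (by omega : k < t + m)
  have hn1 : (1 : ℝ) < (t + m : ℕ) := by exact_mod_cast (by omega : 1 < t + m)
  have hp : (0 : ℝ) < (k : ℝ) / (t + m : ℕ) := by positivity
  have hq : (0 : ℝ) < 1 - (k : ℝ) / (t + m : ℕ) := by
    rw [sub_pos, div_lt_one (by linarith)]; exact hkn'
  have core := stein_core t ht ((t + m : ℕ) : ℝ) k hk0 hkn' hn1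
    (fun j => t.choose j * Hc m k j / (t + m).choose k)
    (fun j => t.choose j * (((k : ℝ) / (t + m : ℕ)) ^ j * (1 - (k : ℝ) / (t + m : ℕ)) ^ (t - j)))
    (fun j => b j / t.choose j)
    (fun j => by positivity)
    (by
      rw [← sum_div, div_eq_one_iff_eq hN.ne', hT]
      exact sum_congr rfl fun j _ => mul_comm _ _)
    (by
      intro j hj
      have h1 := Hc_rec m k j
      have h2 := choose_rec t j hj
      push_cast
      field_simp
      calc _ = (((t : ℝ) - j) * t.choose j) * (((k : ℝ) - j) * Hc m k j) := by ring
        _ = _ := by rw [h1, h2]; ring)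
    (fun j hj => by
      have : (0 : ℝ) < t.choose j := by exact_mod_cast Nat.choose_pos hj
      positivity)
    (by
      have := add_pow ((k : ℝ) / (t + m : ℕ)) (1 - (k : ℝ) / (t + m : ℕ)) t
      rw [add_sub_cancel, one_pow] at this
      refine Eq.trans ?_ this.symm
      exact sum_congr rfl fun j _ => by ring)
    (by
      intro j hj
      have h2 := choose_rec t j hj
      obtain ⟨d, rfl⟩ : ∃ d, t = j + 1 + d := ⟨t - (j + 1), by omega⟩
      have e1 : j + 1 + d - j = d + 1 := by omega
      have e2 : j + 1 + d - (j + 1) = d := by omega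
      rw [e1, e2]
      generalize (k : ℝ) / (j + 1 + d + m : ℕ) = p
      linear_combination p ^ (j + 1) * (1 - p) ^ (d + 1) * h2)
    (fun j => by positivity)
    (fun j => div_le_one_of_le₀ (by exact_mod_cast hb' j) (by positivity))
  have hc : ∀ j ∈ range (t + 1), (0 : ℝ) < t.choose j := fun j hj => by
    exact_mod_cast Nat.choose_pos (by simp at hj; omega)
  convert core using 3
  · rw [sum_div]
    refine sum_congr rfl fun j hj => ?_
    have := hc j hj
    field_simp
  · refine sum_congr rfl fun j hj => ?_
    have := hc j hj
    field_simp



theorem stmt_5 (n k s : ℕ) (hk : 1 ≤ k) (hkn : 2 * k ≤ n) (S : Type*)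
    (F : (Fin n → Bool) → S)
    (hF : ∀ x y : Fin n → Bool, (∀ i : Fin n, (i : ℕ) < s → x i = y i) → F x = F y)
    (A : Set S) :
    |((((Finset.univ : Finset (Fin n → Bool)).filter
          (fun x => (Finset.univ.filter (fun i => x i = true)).card = k)).filter
          (fun x => F x ∈ A)).card : ℝ) /
        ((((Finset.univ : Finset (Fin n → Bool)).filter
          (fun x => (Finset.univ.filter (fun i => x i = true)).card = k)).card : ℝ)) -
      ∑ x : Fin n → Bool,
        (∏ i, if x i then (k : ℝ) / n else 1 - (k : ℝ) / n) *
          (if F x ∈ A then (1 : ℝ) else 0)|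
      ≤ (max (s : ℝ) (2 * n / k) - 1) / ((n : ℝ) - 1) := by
  obtain ⟨t, ht⟩ : ∃ t, t = max 1 (min s n) := ⟨_, rfl⟩
  obtain ⟨m, rfl⟩ : ∃ m, n = t + m := ⟨n - t, by omega⟩
  have h := tv_aux t m k (by omega) hk hkn (fun x => F x ∈ A) (by
    intro x y hxy
    have : F x = F y := hF x y fun i hi => hxy i (by have := i.2; omega)
    simp only [this])
  have hk0 : (0 : ℝ) < k := by exact_mod_cast hk
  have hn1 : (1 : ℝ) < (t + m : ℕ) := by exact_mod_cast (by omega : 1 < t + m)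
  refine le_trans (le_of_eq ?_) (h.trans ?_)
  · rfl
  · have : (t : ℝ) ≤ max (s : ℝ) (2 * (t + m : ℕ) / k) := by
      rcases Nat.eq_zero_or_pos s with h0 | h0
      · refine le_max_of_le_right ?_
        have ht1 : t = 1 := by omega
        rw [le_div_iff₀ hk0]
        have : (2 : ℝ) * k ≤ (t + m : ℕ) := by exact_mod_cast hkn
        rw [ht1] at this ⊢
        push_cast at this ⊢
        linarith
      · exact le_max_of_le_left (by exact_mod_cast (by omega : t ≤ s))
    gcongr
end

section
/- Let $f, m$ be positive integers and $V$ a finite set with $2f \le mf \le |V|$. For each $i \in \{1,\dots,m\}$, let $\mathcal{F}_i$ be a collection of at least $\gamma |V|^f$ ordered $f$-subsets of $V$ (sequences of $f$ distinct elements). Let $\vec X_1, \dots, \vec X_m$ be uniformly random pairwise disjoint ordered $f$-subsets of $V$, and let $N$ be the number of indices $i$ with $\vec X_i \in \mathcal{F}_i$. Then $\Pr[N < \gamma m / 2] \le C_f / (\gamma m)$ for some constant $C_f$ depending only on $f$. -/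
open Finset
open scoped Classical

/-- Counting form of Chebyshev's inequality. -/
lemma cheb_count {G : Type*} (S : Finset G) (m : ℕ) (E : Fin m → G → Prop) (p : Fin m → ℝ)
    (hp0 : ∀ i, 0 ≤ p i) (r t : ℝ) (hr : 1 ≤ r)
    (h1 : ∀ i, ((S.filter (fun g => E i g)).card : ℝ) = p i * S.card)
    (h2 : ∀ i j, i ≠ j → ((S.filter (fun g => E i g ∧ E j g)).card : ℝ) ≤ p i * p j * r * S.card)
    (ht : t ≤ ∑ i, p i) :
    ((S.filter (fun g => ((univ.filter (fun i : Fin m => E i g)).card : ℝ) < t)).card : ℝ)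
      * ((∑ i, p i) - t) ^ 2 ≤ S.card * ((∑ i, p i) + (r - 1) * (∑ i, p i) ^ 2) := by
  set μ := ∑ i, p i with hμ
  have hA : (0 : ℝ) ≤ S.card := by positivity
  have hμ0 : 0 ≤ μ := Finset.sum_nonneg fun i _ => hp0 i
  let N : G → ℝ := fun g => ∑ i, if E i g then (1 : ℝ) else 0
  have hN : ∀ g, ((univ.filter (fun i : Fin m => E i g)).card : ℝ) = N g := by
    intro g; simp [N]
  simp_rw [hN]
  have hsum1 : ∑ g ∈ S, N g = S.card * μ := by
    simp only [N]
    rw [Finset.sum_comm, hμ, Finset.mul_sum]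
    refine Finset.sum_congr rfl fun i _ => ?_
    rw [Finset.sum_boole, h1 i, mul_comm]
  have hsum2 : ∑ g ∈ S, N g ^ 2 ≤ S.card * (μ + r * μ ^ 2) := by
    have e : ∀ g, N g ^ 2 = ∑ i, ∑ j, if E i g ∧ E j g then (1 : ℝ) else 0 := by
      intro g
      simp only [N, sq, Finset.sum_mul_sum]
      refine Finset.sum_congr rfl fun i _ => Finset.sum_congr rfl fun j _ => ?_
      by_cases a : E i g <;> by_cases b : E j g <;> simp [a, b]
    simp_rw [e]
    rw [Finset.sum_comm]
    have e2 : (S.card : ℝ) * (μ + r * μ ^ 2)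
        = ∑ i, ∑ j, ((if i = j then p i * S.card else 0) + p i * p j * r * S.card) := by
      simp_rw [Finset.sum_add_distrib]
      have : μ ^ 2 = ∑ i, ∑ j, p i * p j := by rw [sq, hμ, Finset.sum_mul_sum]
      simp only [← Finset.sum_mul, ← this]
      simp only [Finset.sum_ite_eq, Finset.mem_univ, if_true, ← Finset.sum_mul, ← hμ]
      ring
    rw [e2]
    refine Finset.sum_le_sum fun i _ => ?_
    rw [Finset.sum_comm]
    refine Finset.sum_le_sum fun j _ => ?_
    rw [Finset.sum_boole]
    by_cases hij : i = j
    · subst hij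
      simp only [and_self, if_true, h1 i]
      have : 0 ≤ p i * p i * r * S.card := by
        have := hp0 i
        positivity
      linarith
    · simp only [hij, if_false, zero_add]
      exact h2 i j hij
  have hvar : ∑ g ∈ S, (N g - μ) ^ 2 ≤ S.card * (μ + (r - 1) * μ ^ 2) := by
    have : ∑ g ∈ S, (N g - μ) ^ 2
        = ∑ g ∈ S, N g ^ 2 - 2 * μ * ∑ g ∈ S, N g + S.card * μ ^ 2 := by
      rw [Finset.mul_sum, ← Finset.sum_sub_distrib, ← nsmul_eq_mul, ← Finset.sum_const,
        ← Finset.sum_add_distrib]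
      exact Finset.sum_congr rfl fun g _ => by ring
    rw [this, hsum1]
    nlinarith
  refine le_trans ?_ hvar
  calc _ = ∑ g ∈ S.filter (fun g => N g < t), (μ - t) ^ 2 := by
        rw [Finset.sum_const, nsmul_eq_mul]
    _ ≤ ∑ g ∈ S.filter (fun g => N g < t), (N g - μ) ^ 2 := by
        refine Finset.sum_le_sum fun g hg => ?_
        have := (Finset.mem_filter.1 hg).2
        nlinarith
    _ ≤ _ := Finset.sum_le_sum_of_subset_of_nonneg (Finset.filter_subset _ _)
        fun g _ _ => sq_nonneg _

/-- Any injective tuple can be moved to any other by a permutation. -/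
lemma exists_perm_of_inj {κ V : Type*} [Fintype κ] [Fintype V] (a b : κ → V)
    (ha : Function.Injective a) (hb : Function.Injective b) :
    ∃ σ : Equiv.Perm V, ∀ k, σ (a k) = b k := by
  let e : {x // x ∈ Set.range a} ≃ {x // x ∈ Set.range b} :=
    (Equiv.ofInjective a ha).symm.trans (Equiv.ofInjective b hb)
  refine ⟨e.extendSubtype, fun k => ?_⟩
  rw [Equiv.extendSubtype_apply_of_mem e (a k) ⟨k, rfl⟩]
  have : (⟨a k, ⟨k, rfl⟩⟩ : {x // x ∈ Set.range a}) = Equiv.ofInjective a ha k := rfl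
  simp only [e, Equiv.trans_apply]
  erw [this, Equiv.symm_apply_apply]
  rfl

lemma card_inj_filter {κ V : Type*} [Fintype κ] [Fintype V] :
    ((univ : Finset (κ → V)).filter Function.Injective).card
      = (Fintype.card V).descFactorial (Fintype.card κ) := by
  rw [← Fintype.card_embedding_eq, ← Fintype.card_subtype]
  exact Fintype.card_congr (Equiv.subtypeInjectiveEquivEmbedding κ V)

/-- Uniformity of restrictions of a random injection. -/
lemma count_restrict {α κ V : Type*} [Fintype α] [Fintype κ] [Fintype V]
    (e : κ → α) (he : Function.Injective e) (F : Finset (κ → V)) :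
    (((univ : Finset (α → V)).filter Function.Injective).filter (fun g => g ∘ e ∈ F)).card
      * (Fintype.card V).descFactorial (Fintype.card κ)
    = (F.filter Function.Injective).card
      * ((univ : Finset (α → V)).filter Function.Injective).card := by
  set S := (univ : Finset (α → V)).filter Function.Injective with hS
  let c : (κ → V) → ℕ := fun a => (S.filter (fun g => g ∘ e = a)).card
  have hc : ∀ a b : κ → V, Function.Injective a → Function.Injective b → c a ≤ c b := by
    intro a b ha hb
    obtain ⟨σ, hσ⟩ := exists_perm_of_inj a b ha hb
    refine Finset.card_le_card_of_injOn (fun g => σ ∘ g) ?_ ?_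
    · intro g hg
      simp only [hS, Finset.coe_filter, Finset.mem_filter, Finset.mem_univ, true_and,
        Set.mem_ofPred_eq] at hg ⊢
      refine ⟨σ.injective.comp hg.1, ?_⟩
      funext k
      rw [← hσ k, ← hg.2]; rfl
    · intro g _ g' _ h
      funext x
      exact σ.injective (congrFun h x)
  have key : ∀ F : Finset (κ → V), (S.filter (fun g => g ∘ e ∈ F)).card
      = ∑ a ∈ F.filter Function.Injective, c a := by
    intro F
    rw [Finset.card_eq_sum_card_fiberwise (f := fun g => g ∘ e)
      (t := F.filter Function.Injective)]
    · refine Finset.sum_congr rfl fun a ha => ?_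
      simp only [c]
      congr 1
      ext g
      simp only [Finset.mem_filter] at ha ⊢
      constructor
      · rintro ⟨⟨h, _⟩, h'⟩; exact ⟨h, h'⟩
      · rintro ⟨h, h'⟩; exact ⟨⟨h, h' ▸ ha.1⟩, h'⟩
    · intro g hg
      simp only [hS, Finset.coe_filter, Finset.mem_filter, Finset.mem_univ, true_and,
        Set.mem_ofPred_eq] at hg ⊢
      exact ⟨hg.2, hg.1.comp he⟩
  have hU := key univ
  simp only [Finset.mem_univ, Finset.filter_true] at hU
  rw [key F, hU, ← card_inj_filter (κ := κ) (V := V)]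
  by_cases hne : ∃ a : κ → V, Function.Injective a
  · obtain ⟨a, ha⟩ := hne
    have hcc : ∀ F : Finset (κ → V), ∑ b ∈ F.filter Function.Injective, c b
        = (F.filter Function.Injective).card * c a := by
      intro F
      rw [← smul_eq_mul, ← Finset.sum_const]
      refine Finset.sum_congr rfl fun b hb => ?_
      have := (Finset.mem_filter.1 hb).2
      exact le_antisymm (hc _ _ this ha) (hc _ _ ha this)
    rw [hcc, hcc]; ring
  · push Not at hne
    have : ∀ F : Finset (κ → V), F.filter Function.Injective = ∅ := by
      intro F
      exact Finset.filter_eq_empty_iff.2 fun a _ => hne a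
    simp [this]

lemma desc_lower (n k f : ℕ) (hf : 0 < f) (hn : k + f ≤ n) :
    (n : ℝ) ^ f * (1 - f * (k + f) / n) ≤ ((n - k).descFactorial f : ℝ) := by
  have h := Nat.pow_sub_le_descFactorial (n - k) f
  have h' : (n - k - f) ^ f ≤ (n - k).descFactorial f :=
    le_trans (Nat.pow_le_pow_left (by omega) f) h
  have hn0 : (0 : ℝ) < n := by exact_mod_cast (by omega : 0 < n)
  have hx : ((k : ℝ) + f) / n ≤ 1 := by
    rw [div_le_one hn0]; exact_mod_cast hn
  have hb := one_add_mul_le_pow (a := -(((k : ℝ) + f) / n)) (by linarith) f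
  have h3 : (n : ℝ) ^ f * (1 - f * (k + f) / n) ≤ (n : ℝ) ^ f * (1 + -(((k : ℝ) + f) / n)) ^ f := by
    refine mul_le_mul_of_nonneg_left (le_trans (le_of_eq ?_) hb) (by positivity)
    ring
  refine h3.trans ?_
  rw [← mul_pow]
  have h4 : (n : ℝ) * (1 + -(((k : ℝ) + f) / n)) = ((n - k - f : ℕ) : ℝ) := by
    rw [Nat.cast_sub (by omega), Nat.cast_sub (by omega)]
    field_simp
    ring
  rw [h4]
  exact_mod_cast h'

lemma final_arith (B A μ r γ m f n : ℝ) (hB0 : 0 ≤ B) (hSpos : 0 < A) (hμpos : 0 < μ)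
    (hγm : 0 < γ * m) (hγ : 0 < γ) (hγ1 : γ ≤ 1) (hn0 : 0 < n) (hmnR : m ≤ n)
    (hrdef : r = 1 + 4 * f ^ 2 / n) (hμ : 3 / 4 * (γ * m) ≤ μ)
    (key' : B * (μ - γ * m / 2) ^ 2 ≤ A * (μ + (r - 1) * μ ^ 2)) :
    B ≤ (12 + 36 * f ^ 2) / (γ * m) * A := by
  have k1 : B * (μ / 3) ^ 2 ≤ B * (μ - γ * m / 2) ^ 2 := by
    have : μ / 3 ≤ μ - γ * m / 2 := by linarith
    gcongr
  have k2 : r - 1 ≤ 4 * f ^ 2 / (γ * m) := by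
    rw [hrdef, add_sub_cancel_left]
    have hm0 : 0 < m := pos_of_mul_pos_right hγm hγ.le
    have : γ * m ≤ n := by nlinarith
    gcongr
  have k3 : μ ≤ 4 / 3 / (γ * m) * μ ^ 2 := by
    rw [div_mul_eq_mul_div, le_div_iff₀ hγm]
    nlinarith
  have k4 : A * (μ + (r - 1) * μ ^ 2)
      ≤ A * (4 / 3 / (γ * m) * μ ^ 2 + 4 * f ^ 2 / (γ * m) * μ ^ 2) := by
    gcongr
  have k5 : B * (μ / 3) ^ 2 ≤ ((12 + 36 * f ^ 2) / (γ * m) * A) * (μ / 3) ^ 2 := by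
    refine (k1.trans (key'.trans k4)).trans (le_of_eq ?_)
    ring
  exact le_of_mul_le_mul_right k5 (by positivity)

set_option maxHeartbeats 2000000 in
theorem stmt_7 (f : ℕ) (hf : 0 < f) :
    ∃ C : ℝ, ∀ (m : ℕ) (V : Type) [Fintype V] [DecidableEq V] (γ : ℝ),
      0 < γ → 0 < m → 2 * f ≤ m * f → m * f ≤ Fintype.card V →
      ∀ ℱ : Fin m → Finset (Fin f → V),
        (∀ i, γ * (Fintype.card V : ℝ) ^ f ≤ ((ℱ i).card : ℝ)) →
        (((((Finset.univ : Finset (Fin (m * f) → V)).filter Function.Injective)).filter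
            (fun g => ((Finset.univ.filter (fun i : Fin m =>
              (fun j : Fin f => g (finProdFinEquiv (i, j))) ∈ ℱ i)).card : ℝ) < γ * m / 2)).card : ℝ) /
          ((((Finset.univ : Finset (Fin (m * f) → V)).filter Function.Injective).card : ℝ))
        ≤ C / (γ * m) := by
  refine ⟨12 + 36 * f ^ 2, ?_⟩
  intro m V _ _ γ hγ hm h2m hmn ℱ hℱ
  set n := Fintype.card V with hn
  have hf1 : (1 : ℝ) ≤ f := by exact_mod_cast hf
  have hm0 : (0 : ℝ) < m := by exact_mod_cast hm
  have hγm : 0 < γ * m := by positivity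
  have hmn' : m ≤ n := le_trans (Nat.le_mul_of_pos_right m hf) hmn
  have hn0 : (0 : ℝ) < n := by exact_mod_cast (by omega : 0 < n)
  have hmnR : (m : ℝ) ≤ n := by exact_mod_cast hmn'
  by_cases hbig : γ * m < 12 + 36 * f ^ 2
  · refine le_trans (b := 1) ?_ ?_
    · refine div_le_one_of_le₀ ?_ (by positivity)
      exact_mod_cast Finset.card_filter_le _ _
    · rw [le_div_iff₀ hγm]; linarith
  push Not at hbig
  have hγ1 : γ ≤ 1 := by
    have h := hℱ ⟨0, hm⟩
    have h' : ((ℱ ⟨0, hm⟩).card : ℝ) ≤ (n : ℝ) ^ f := by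
      have := Finset.card_le_univ (ℱ ⟨0, hm⟩)
      rw [Fintype.card_fun, Fintype.card_fin] at this
      exact_mod_cast this
    have hpos : (0 : ℝ) < (n : ℝ) ^ f := by positivity
    by_contra hc
    push Not at hc
    nlinarith
  have hγn : 12 + 36 * (f : ℝ) ^ 2 ≤ γ * n := hbig.trans (by gcongr)
  have hnbig : 12 + 36 * (f : ℝ) ^ 2 ≤ n := hγn.trans (by nlinarith)
  have hnN : 12 + 36 * f ^ 2 ≤ n := by exact_mod_cast hnbig
  have hfsq : f ≤ f ^ 2 := by nlinarith
  set D1 : ℝ := (n.descFactorial f : ℝ) with hD1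
  set D2 : ℝ := ((n - f).descFactorial f : ℝ) with hD2
  have hD1le : D1 ≤ (n : ℝ) ^ f := by rw [hD1]; exact_mod_cast Nat.descFactorial_le_pow n f
  have hD1ge : (n : ℝ) ^ f * (1 - (f : ℝ) ^ 2 / n) ≤ D1 := by
    have := desc_lower n 0 f hf (by omega)
    simp only [Nat.cast_zero, zero_add, Nat.sub_zero] at this
    rwa [sq]
  have hD2ge : (n : ℝ) ^ f * (1 - 2 * (f : ℝ) ^ 2 / n) ≤ D2 := by
    have := desc_lower n f f hf (by omega)
    refine le_trans (le_of_eq ?_) this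
    ring
  have hD1pos : 0 < D1 := by
    have : 0 < n.descFactorial f := Nat.descFactorial_pos.2 (by omega)
    exact Nat.cast_pos.2 this
  have hD2pos : 0 < D2 := by
    have : 0 < (n - f).descFactorial f := Nat.descFactorial_pos.2 (by omega)
    exact Nat.cast_pos.2 this
  have hD12 : (n.descFactorial (f + f) : ℝ) = D1 * D2 := by
    have := Nat.descFactorial_mul_descFactorial (n := n) (k := f) (m := f + f) (by omega)
    rw [Nat.add_sub_cancel] at this
    rw [← this, hD1, hD2]; push_cast; ring
  clear_value D1 D2
  set S := (Finset.univ : Finset (Fin (m * f) → V)).filter Function.Injective with hS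
  have hSpos : (0 : ℝ) < S.card := by
    have : 0 < S.card := by
      have e := card_inj_filter (κ := Fin (m * f)) (V := V)
      rw [Fintype.card_fin] at e
      have : 0 < n.descFactorial (m * f) := Nat.descFactorial_pos.2 hmn
      rw [← hn] at e
      rw [← e] at this
      rw [hS]
      convert this
    exact_mod_cast this
  let p : Fin m → ℝ := fun i => (((ℱ i).filter Function.Injective).card : ℝ) / D1
  obtain ⟨r, hrdef⟩ : ∃ r : ℝ, r = 1 + 4 * (f : ℝ) ^ 2 / n := ⟨_, rfl⟩
  have hp0 : ∀ i, 0 ≤ p i := fun i => by positivity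
  have hr : D1 ≤ r * D2 := by
    have hx : 0 ≤ (f : ℝ) ^ 2 / n := by positivity
    have hx1 : (f : ℝ) ^ 2 / n ≤ 1 / 4 := by
      rw [div_le_iff₀ hn0]; nlinarith
    have hr0 : 0 ≤ r := by rw [hrdef]; positivity
    have e1 : 1 ≤ r * (1 - 2 * (f : ℝ) ^ 2 / n) := by
      rw [hrdef]
      rw [mul_div_assoc, mul_div_assoc]
      nlinarith
    calc D1 ≤ (n : ℝ) ^ f * 1 := by linarith
      _ ≤ (n : ℝ) ^ f * (r * (1 - 2 * (f : ℝ) ^ 2 / n)) := by gcongr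
      _ = r * ((n : ℝ) ^ f * (1 - 2 * (f : ℝ) ^ 2 / n)) := by ring
      _ ≤ r * D2 := by gcongr
  have h1 : ∀ i, ((S.filter (fun g => (fun j : Fin f => g (finProdFinEquiv (i, j))) ∈ ℱ i)).card : ℝ)
      = p i * S.card := by
    intro i
    have h := count_restrict (V := V) (fun j : Fin f => (finProdFinEquiv (i, j) : Fin (m * f)))
      (fun a b hab => by simpa using hab) (ℱ i)
    rw [Fintype.card_fin] at h
    have h' : ((S.filter (fun g => (fun j : Fin f => g (finProdFinEquiv (i, j))) ∈ ℱ i)).card : ℝ) * D1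
        = (((ℱ i).filter Function.Injective).card : ℝ) * S.card := by
      rw [hD1, hS, ← Nat.cast_mul, ← Nat.cast_mul]
      refine congrArg Nat.cast ?_
      convert h using 3
      · ext g
        simp only [Finset.mem_filter, Finset.mem_univ, true_and]
        rfl
      · congr!
      · congr!
    simp only [p]
    rw [div_mul_eq_mul_div, eq_div_iff hD1pos.ne', h']
  have h2 : ∀ i j, i ≠ j →
      ((S.filter (fun g => (fun k : Fin f => g (finProdFinEquiv (i, k))) ∈ ℱ i ∧
        (fun k : Fin f => g (finProdFinEquiv (j, k))) ∈ ℱ j)).card : ℝ)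
      ≤ p i * p j * r * S.card := by
    intro i j hij
    let F : Finset (Fin f ⊕ Fin f → V) :=
      univ.filter (fun a => a ∘ Sum.inl ∈ ℱ i ∧ a ∘ Sum.inr ∈ ℱ j)
    have h := count_restrict (V := V)
      (Sum.elim (fun k : Fin f => (finProdFinEquiv (i, k) : Fin (m * f)))
        (fun k : Fin f => (finProdFinEquiv (j, k) : Fin (m * f))))
      (by
        rintro (a | a) (b | b) hab
        · simpa using hab
        · simp [hij] at hab
        · simp [hij.symm] at hab
        · simpa using hab) F
    rw [Fintype.card_sum, Fintype.card_fin] at h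
    have hF : (F.filter Function.Injective).card ≤
        ((ℱ i).filter Function.Injective).card * ((ℱ j).filter Function.Injective).card := by
      rw [← Finset.card_product]
      refine Finset.card_le_card_of_injOn (fun a => (a ∘ Sum.inl, a ∘ Sum.inr)) ?_ ?_
      · intro a ha
        simp only [F, Finset.coe_filter, Finset.mem_filter, Finset.mem_univ, true_and,
          Set.mem_ofPred_eq, Finset.coe_product, Set.mem_prod] at ha ⊢
        exact ⟨⟨ha.1.1, ha.2.comp Sum.inl_injective⟩, ⟨ha.1.2, ha.2.comp Sum.inr_injective⟩⟩
      · intro a _ b _ hab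
        simp only [Prod.mk.injEq] at hab
        funext x
        rcases x with x | x
        · exact congrFun hab.1 x
        · exact congrFun hab.2 x
    have h' : ((S.filter (fun g => (fun k : Fin f => g (finProdFinEquiv (i, k))) ∈ ℱ i ∧
        (fun k : Fin f => g (finProdFinEquiv (j, k))) ∈ ℱ j)).card : ℝ) * (D1 * D2)
        = ((F.filter Function.Injective).card : ℝ) * S.card := by
      rw [← hD12, hS]
      rw [← Nat.cast_mul, ← Nat.cast_mul]
      refine congrArg Nat.cast ?_
      convert h using 3
      · ext g
        simp only [F, Finset.mem_filter, Finset.mem_univ, true_and]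
        rfl
      · congr!
      · congr!
    have hF' : ((F.filter Function.Injective).card : ℝ) ≤ (p i * D1) * (p j * D1) := by
      simp only [p]
      rw [div_mul_cancel₀ _ hD1pos.ne', div_mul_cancel₀ _ hD1pos.ne']
      exact_mod_cast hF
    have hpp : 0 ≤ p i * p j * D1 := mul_nonneg (mul_nonneg (hp0 i) (hp0 j)) hD1pos.le
    refine le_of_mul_le_mul_right ?_ (mul_pos hD1pos hD2pos)
    rw [h']
    calc ((F.filter Function.Injective).card : ℝ) * S.card
        ≤ ((p i * D1) * (p j * D1)) * S.card := by gcongr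
      _ = (p i * p j * D1) * D1 * S.card := by ring
      _ ≤ (p i * p j * D1) * (r * D2) * S.card := by gcongr
      _ = _ := by ring
  have hpl : ∀ i, 3 / 4 * γ ≤ p i := by
    intro i
    have hsplit : ((ℱ i).card : ℝ) ≤ ((ℱ i).filter Function.Injective).card + ((n : ℝ) ^ f - D1) := by
      have a1 := Finset.card_filter_add_card_filter_not (s := ℱ i) (Function.Injective)
      have a2 := Finset.card_filter_add_card_filter_not
        (s := (univ : Finset (Fin f → V))) (Function.Injective)
      have a3 := card_inj_filter (κ := Fin f) (V := V)
      have a4 : ((ℱ i).filter (fun a => ¬ Function.Injective a)).card ≤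
        ((univ : Finset (Fin f → V)).filter (fun a => ¬ Function.Injective a)).card :=
        Finset.card_le_card (Finset.filter_subset_filter _ (Finset.subset_univ _))
      rw [Finset.card_univ, Fintype.card_fun, Fintype.card_fin] at a2
      rw [Fintype.card_fin] at a3
      have a2' : n.descFactorial f + ((univ : Finset (Fin f → V)).filter (fun a => ¬ Function.Injective a)).card = n ^ f := by
        rw [← a2, hn, ← a3]
        congr!
      have b1 : ((ℱ i).card : ℝ) = ((ℱ i).filter Function.Injective).card
        + ((ℱ i).filter (fun a => ¬ Function.Injective a)).card := by exact_mod_cast a1.symm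
      have b2 : D1 + (((univ : Finset (Fin f → V)).filter (fun a => ¬ Function.Injective a)).card : ℝ)
        = (n : ℝ) ^ f := by rw [hD1]; exact_mod_cast a2'
      have b4 : (((ℱ i).filter (fun a => ¬ Function.Injective a)).card : ℝ) ≤
        ((univ : Finset (Fin f → V)).filter (fun a => ¬ Function.Injective a)).card := by
        exact_mod_cast a4
      linarith
    have hx : (f : ℝ) ^ 2 / n ≤ γ / 4 := by
      rw [div_le_iff₀ hn0]; nlinarith
    have hpow : (0 : ℝ) < (n : ℝ) ^ f := by positivity
    have hi := hℱ i
    simp only [p]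
    rw [le_div_iff₀ hD1pos]
    have c1 : (n : ℝ) ^ f * ((f : ℝ) ^ 2 / n) ≤ (n : ℝ) ^ f * (γ / 4) := by gcongr
    have c2 : 3 / 4 * γ * D1 ≤ 3 / 4 * γ * (n : ℝ) ^ f := by gcongr
    nlinarith
  have hμ : 3 / 4 * (γ * m) ≤ ∑ i, p i := by
    have := Finset.sum_le_sum (s := univ) (fun i _ => hpl i)
    simp only [Finset.sum_const, Finset.card_univ, Fintype.card_fin, nsmul_eq_mul] at this
    linarith
  have hr1 : 1 ≤ r := by rw [hrdef]; linarith [show 0 ≤ 4 * (f : ℝ) ^ 2 / n by positivity]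
  have key := cheb_count S m (fun i g => (fun j : Fin f => g (finProdFinEquiv (i, j))) ∈ ℱ i) p hp0 r
    (γ * m / 2) hr1 (fun i => by convert h1 i) (fun i j hij => by convert h2 i j hij) (by linarith)
  set μ := ∑ i, p i with hμdef
  have hμpos : 0 < μ := by linarith
  rw [div_le_iff₀ hSpos]
  set B : ℝ := ((S.filter (fun g => ((Finset.univ.filter (fun i : Fin m =>
              (fun j : Fin f => g (finProdFinEquiv (i, j))) ∈ ℱ i)).card : ℝ) < γ * m / 2)).card : ℝ) with hB
  have key' : B * (μ - γ * m / 2) ^ 2 ≤ S.card * (μ + (r - 1) * μ ^ 2) := by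
    convert key
  have hB0 : 0 ≤ B := by rw [hB]; positivity
  exact final_arith B S.card μ r γ m f n hB0 hSpos hμpos hγm hγ hγ1 hn0 hmnR hrdef hμ key'
end
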